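/- Let T, P, Q be benign 12-SV tables of shape λ/μ with T → P and T → Q. Then there exists a benign 12-SV table T' of shape λ/μ with P →* T' and Q →* T'. -/

import Mathlib

open scoped Classical

/-- A partition, given as its weakly decreasing sequence of parts (0-indexed),
with finitely many nonzero parts. -/
def IsPartitionFun (f : ℕ → ℕ) : Prop :=
  (∀ i, f (i + 1) ≤ f i) ∧ ∃ N, ∀ i, N ≤ i → f i = 0

/-- Box `(i, j)` (row `i`, column `j`, both 0-indexed) lies in the skew shape `lam/mu`. -/
def InShape (lam mu : ℕ → ℕ) (i j : ℕ) : Prop :=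
  mu i ≤ j ∧ j < lam i

/-- `A ≤ B` for finite sets of naturals: every element of `A` is at most every
element of `B` (for nonempty sets this says `max A ≤ min B`). -/
def FinsetLE (A B : Finset ℕ) : Prop :=
  ∀ a ∈ A, ∀ b ∈ B, a ≤ b

/-- A set-valued reverse plane partition of skew shape `lam/mu`: every box of the
shape is filled with a nonempty finite set of positive integers, the sets weakly
increase along rows and down columns, and boxes outside the shape are empty. -/
def IsSVRPP (lam mu : ℕ → ℕ) (T : ℕ → ℕ → Finset ℕ) : Prop :=
  (∀ i j, ¬ InShape lam mu i j → T i j = ∅) ∧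
  (∀ i j, InShape lam mu i j → (T i j).Nonempty) ∧
  (∀ i j x, x ∈ T i j → 1 ≤ x) ∧
  (∀ i j, InShape lam mu i j → InShape lam mu i (j + 1) → FinsetLE (T i j) (T i (j + 1))) ∧
  (∀ i j, InShape lam mu i j → InShape lam mu (i + 1) j → FinsetLE (T i j) (T (i + 1) j))

/-- An SVRPP all of whose entries are subsets of `{1, …, n}`. -/
def IsSVRPPn (lam mu : ℕ → ℕ) (n : ℕ) (T : ℕ → ℕ → Finset ℕ) : Prop :=
  IsSVRPP lam mu T ∧ ∀ i j, T i j ⊆ Finset.Icc 1 n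

/-- `ircont T v` = number of columns of `T` containing a set that contains `v`. -/
noncomputable def ircont (T : ℕ → ℕ → Finset ℕ) (v : ℕ) : ℕ :=
  Set.ncard {j : ℕ | ∃ i, v ∈ T i j}

/-- `ceq lam mu T i` = number of boxes `(i,j)` of the shape with `(i+1,j)` also in the
shape and `max T(i,j) = min T(i+1,j)`. -/
noncomputable def ceq (lam mu : ℕ → ℕ) (T : ℕ → ℕ → Finset ℕ) (i : ℕ) : ℕ :=
  Set.ncard {j : ℕ | InShape lam mu i j ∧ InShape lam mu (i + 1) j ∧
    ∃ m, m ∈ T i j ∧ (∀ x ∈ T i j, x ≤ m) ∧ m ∈ T (i + 1) j ∧ ∀ x ∈ T (i + 1) j, m ≤ x}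

/-- `exv lam mu T i` = excess of row `i`: the sum over the boxes of row `i` of
(cardinality of the filling minus one). -/
def exv (lam mu : ℕ → ℕ) (T : ℕ → ℕ → Finset ℕ) (i : ℕ) : ℕ :=
  ∑ j ∈ Finset.Ico (mu i) (lam i), ((T i j).card - 1)

/-! ### Two-letter fillings (letters `a` and `a+1`) and descent resolution -/

/-- Column `j` of the filling `S` contains the letter `x` somewhere. -/
def ColHas (S : ℕ → ℕ → Finset ℕ) (j x : ℕ) : Prop := ∃ r, x ∈ S r j

/-- Column `j` is `a`-pure: it contains the letter `a` but not the letter `a+1`. -/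
def ColPureA (a : ℕ) (S : ℕ → ℕ → Finset ℕ) (j : ℕ) : Prop :=
  ColHas S j a ∧ ¬ ColHas S j (a + 1)

/-- Column `j` is `(a+1)`-pure: it contains the letter `a+1` but not the letter `a`. -/
def ColPureB (a : ℕ) (S : ℕ → ℕ → Finset ℕ) (j : ℕ) : Prop :=
  ColHas S j (a + 1) ∧ ¬ ColHas S j a

/-- Column `j` is mixed: it contains both letters `a` and `a+1`. -/
def ColMixed (a : ℕ) (S : ℕ → ℕ → Finset ℕ) (j : ℕ) : Prop :=
  ColHas S j a ∧ ColHas S j (a + 1)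

/-- `sep a S j`: the smallest row index `r` with `a+1 ∈ S r j` (the transition row of a
mixed column). -/
noncomputable def sep (a : ℕ) (S : ℕ → ℕ → Finset ℕ) (j : ℕ) : ℕ :=
  sInf {r : ℕ | a + 1 ∈ S r j}

/-- `botA a S j`: the largest row index `r` with `a ∈ S r j` (the bottom-most box of
column `j` containing the letter `a`). -/
noncomputable def botA (a : ℕ) (S : ℕ → ℕ → Finset ℕ) (j : ℕ) : ℕ :=
  sSup {r : ℕ | a ∈ S r j}

/-- `k` is a descent of `S`: in some row, a box whose maximum is `a+1` lies immediately
to the left of a box whose minimum is `a`. -/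
def Descent (a : ℕ) (S : ℕ → ℕ → Finset ℕ) (k : ℕ) : Prop :=
  ∃ r, a + 1 ∈ S r k ∧ a ∈ S r (k + 1)

/-- The flip map: each entry of every `a`-pure column is replaced by `{a+1}`, each entry
of every `(a+1)`-pure column is replaced by `{a}`, and mixed columns stay unchanged. -/
noncomputable def flipT (a : ℕ) (S : ℕ → ℕ → Finset ℕ) : ℕ → ℕ → Finset ℕ :=
  fun r j =>
    if ColPureA a S j then (S r j).image (fun _ => a + 1)
    else if ColPureB a S j then (S r j).image (fun _ => a)
    else S r j

/-- The descent-resolution operation `res_k` at columns `k, k+1`, implementing the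
(M1), (2M) and (21) moves (with `a, a+1` playing the roles of `1, 2`). -/
noncomputable def resFun (a : ℕ) (S : ℕ → ℕ → Finset ℕ) (k : ℕ) : ℕ → ℕ → Finset ℕ :=
  fun r j =>
    if ColMixed a S k ∧ ColPureA a S (k + 1) then
      -- (M1): the transition row is `sep a S k`, the transition entry is `S (sep a S k) k`.
      (if j = k then (S r j).image (fun _ => a)
       else if j = k + 1 then
         (if (S r j).Nonempty then
            (if r < sep a S k then {a}
             else if r = sep a S k then S r k
             else {a + 1})
          else ∅)
       else S r j)
    else if ColPureB a S k ∧ ColMixed a S (k + 1) then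
      -- (2M): the transition row is `botA a S (k+1)`, the transition entry is
      -- `S (botA a S (k+1)) (k+1)`.
      (if j = k then
         (if (S r j).Nonempty then
            (if r < botA a S (k + 1) then {a}
             else if r = botA a S (k + 1) then S r (k + 1)
             else {a + 1})
          else ∅)
       else if j = k + 1 then (S r j).image (fun _ => a + 1)
       else S r j)
    else if ColPureB a S k ∧ ColPureA a S (k + 1) then
      -- (21): the two columns swap purities.
      (if j = k then (S r j).image (fun _ => a)
       else if j = k + 1 then (S r j).image (fun _ => a + 1)
       else S r j)
    else S r j

/-- One descent-resolution step: `ResStep a S S'` holds when `S' = res_k S` for some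
descent `k` of `S`. -/
def ResStep (a : ℕ) (S S' : ℕ → ℕ → Finset ℕ) : Prop :=
  ∃ k, Descent a S k ∧ S' = resFun a S k

/-! ### 12-SV tables of a skew shape -/

/-- A 12-SV table of shape `lam/mu`: every box of the shape is filled with a nonempty
subset of `{1,2}`, columns weakly increase, rows are unconstrained, and boxes outside
the shape are empty. -/
def Is12SVTable (lam mu : ℕ → ℕ) (T : ℕ → ℕ → Finset ℕ) : Prop :=
  (∀ i j, ¬ InShape lam mu i j → T i j = ∅) ∧
  (∀ i j, InShape lam mu i j → (T i j).Nonempty ∧ T i j ⊆ ({1, 2} : Finset ℕ)) ∧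
  (∀ i j, InShape lam mu i j → InShape lam mu (i + 1) j → FinsetLE (T i j) (T (i + 1) j))

/-- A 12-SV table is benign if over consecutive mixed columns `k < k'` the `sep` values
weakly decrease, strictly so whenever column `k'` contains a box filled with `{1,2}`. -/
def Benign (T : ℕ → ℕ → Finset ℕ) : Prop :=
  ∀ k k', k < k' → ColMixed 1 T k → ColMixed 1 T k' →
    (∀ m, k < m → m < k' → ¬ ColMixed 1 T m) →
    sep 1 T k' ≤ sep 1 T k ∧
    ((∃ i, T i k' = ({1, 2} : Finset ℕ)) → sep 1 T k' < sep 1 T k)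

/-- The signature of column `j`: `0` for an empty or `(a+1)`-pure column, `1` for a mixed
column, `2` for an `a`-pure column. -/
noncomputable def sig (a : ℕ) (S : ℕ → ℕ → Finset ℕ) (j : ℕ) : ℕ :=
  if ColPureA a S j then 2 else if ColMixed a S j then 1 else 0

/-- `ℓ(S) = Σ_{j ≥ 1} j · sig(column j)`, columns being `1`-indexed (internally the
`0`-indexed column `j` has position `j + 1`). -/
noncomputable def ellStat (a : ℕ) (S : ℕ → ℕ → Finset ℕ) : ℕ :=
  ∑ᶠ j : ℕ, (j + 1) * sig a S j

/-! Extend every column of a table to all rows of `ℕ`, so that a mixed column continues with `{1}`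
above the shape and with `{2}` below it, and a pure column stays pure. On the extended table a
resolution step at `k` just interchanges the columns `k` and `k + 1`; the descent row together
with the convexity of the shape keeps the transition of a mixed column inside the shape.
Resolutions at `u` and `v` with `u + 2 ≤ v` therefore commute, and those at `u` and `u + 1` are
joined by the braid relation `s_u s_{u+1} s_u = s_{u+1} s_u s_{u+1}`. -/

open Equiv (Perm swap)

theorem InShape.of_le_of_le {lam mu : ℕ → ℕ} (hlam : Antitone lam) (hmu : Antitone mu)
    {r i s j m l : ℕ} (h : InShape lam mu r j) (h' : InShape lam mu s l)
    (hri : r ≤ i) (his : i ≤ s) (hjm : j ≤ m) (hml : m ≤ l) : InShape lam mu i m :=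
  ⟨(hmu hri).trans (h.1.trans hjm), hml.trans_lt (h'.2.trans_le (hlam his))⟩

section Fillings

variable {a k : ℕ} {S T : ℕ → ℕ → Finset ℕ}

theorem isLeast_sep {j : ℕ} (h : ColHas S j (a + 1)) :
    IsLeast {r | a + 1 ∈ S r j} (sep a S j) :=
  ⟨Nat.sInf_mem h, fun _ => Nat.sInf_le⟩

theorem resFun_of_ne {j : ℕ} (hk : j ≠ k) (hk' : j ≠ k + 1) (r : ℕ) :
    resFun a S k r j = S r j := by
  simp [resFun, hk, hk']

theorem resFun_eq_empty {r j : ℕ} (h : S r j = ∅) : resFun a S k r j = ∅ := by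
  simp [resFun, h]

theorem Benign.sep_le_sep (hB : Benign S) {k l : ℕ} (hkl : k < l) (hk : ColMixed 1 S k)
    (hl : ColMixed 1 S l) :
    sep 1 S l ≤ sep 1 S k ∧ ((∃ i, S i l = {1, 2}) → sep 1 S l < sep 1 S k) := by
  induction hn : l - k using Nat.strong_induction_on generalizing k l with
  | _ n ih =>
    by_cases hcons : ∀ m, k < m → m < l → ¬ ColMixed 1 S m
    · exact hB k l hkl hk hl hcons
    · push Not at hcons
      obtain ⟨m, hkm, hml, hm⟩ := hcons
      have left := ih (m - k) (by omega) hkm hk hm rfl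
      have right := ih (l - m) (by omega) hml hm hl rfl
      exact ⟨right.1.trans left.1, fun h => (right.2 h).trans_le left.1⟩

theorem benign_congr (hmixed : ∀ j, ColMixed 1 S j ↔ ColMixed 1 T j)
    (hsep : ∀ j, ColMixed 1 S j → sep 1 S j = sep 1 T j)
    (hpair : ∀ i j, S i j = {1, 2} ↔ T i j = {1, 2}) : Benign S ↔ Benign T := by
  simp only [Benign, hmixed, hpair]
  refine forall₂_congr fun k l => forall₄_congr fun _ hk hl _ => ?_
  rw [hsep k ((hmixed k).2 hk), hsep l ((hmixed l).2 hl)]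

end Fillings

section Permutations

theorem swap_mul_swap_mul_swap_comm {α : Type*} [DecidableEq α] {x y z : α} (hxy : x ≠ y)
    (hxz : x ≠ z) (hyz : y ≠ z) :
    swap x y * swap y z * swap x y = swap y z * swap x y * swap y z := by
  rw [Equiv.swap_mul_swap_mul_swap hxy hxz, Equiv.swap_comm x y, Equiv.swap_comm y z,
    Equiv.swap_mul_swap_mul_swap hyz.symm hxz.symm, Equiv.swap_comm]

/-- The table whose column `j` is column `σ j` of `C`. Interchanging two adjacent columns is the
effect of a descent resolution on the quadrant table presenting the given one. -/
def permuteColumns (C : ℕ → ℕ → Finset ℕ) (σ : Perm ℕ) : ℕ → ℕ → Finset ℕ :=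
  fun r j => C r (σ j)

variable {C : ℕ → ℕ → Finset ℕ}

theorem permuteColumns_permuteColumns (σ τ : Perm ℕ) :
    permuteColumns (permuteColumns C σ) τ = permuteColumns C (σ * τ) :=
  rfl

theorem Benign.permuteColumns_of_strictMonoOn (hB : Benign C) {σ : Perm ℕ}
    (hσ : StrictMonoOn σ {j | ColMixed 1 C (σ j)}) : Benign (permuteColumns C σ) :=
  fun _ _ hkl hk hl _ => hB.sep_le_sep (hσ hk hl hkl) hk hl

theorem Benign.permuteColumns_swap (hB : Benign C) {k : ℕ}
    (hk : ¬ (ColMixed 1 C k ∧ ColMixed 1 C (k + 1))) :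
    Benign (permuteColumns C (swap k (k + 1))) := by
  refine hB.permuteColumns_of_strictMonoOn fun i hi j hj hij => ?_
  simp only [Set.mem_ofPred_eq, Equiv.swap_apply_def] at hi hj ⊢
  grind

end Permutations

/-- A filling of all boxes of the quadrant `ℕ × ℕ` by nonempty subsets of `{1, 2}` with weakly
increasing columns; such fillings serve as shape-independent models of 12-SV tables. -/
structure IsQuadrantTable (C : ℕ → ℕ → Finset ℕ) : Prop where
  nonempty : ∀ r j, (C r j).Nonempty
  subset : ∀ r j, C r j ⊆ {1, 2}
  finsetLE : ∀ {r s} j, r < s → FinsetLE (C r j) (C s j)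

namespace IsQuadrantTable

variable {C : ℕ → ℕ → Finset ℕ} {i j r s : ℕ}

theorem permuteColumns (hC : IsQuadrantTable C) (σ : Perm ℕ) :
    IsQuadrantTable (permuteColumns C σ) :=
  ⟨fun r j => hC.nonempty r (σ j), fun r j => hC.subset r (σ j), fun j => hC.finsetLE (σ j)⟩

theorem eq_one (hC : IsQuadrantTable C) (h : 2 ∉ C r j) : C r j = {1} := by
  refine (hC.nonempty r j).subset_singleton_iff.1 fun x hx => ?_
  have := hC.subset r j hx
  grind

theorem eq_two (hC : IsQuadrantTable C) (h : 1 ∉ C r j) : C r j = {2} := by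
  refine (hC.nonempty r j).subset_singleton_iff.1 fun x hx => ?_
  have := hC.subset r j hx
  grind

theorem eq_pair (hC : IsQuadrantTable C) (h₁ : 1 ∈ C r j) (h₂ : 2 ∈ C r j) : C r j = {1, 2} :=
  (hC.subset r j).antisymm (by simp [Finset.insert_subset_iff, h₁, h₂])

theorem le_of_two_mem_of_one_mem (hC : IsQuadrantTable C) (h₂ : 2 ∈ C r j) (h₁ : 1 ∈ C s j) :
    s ≤ r := by
  by_contra! hrs
  have := hC.finsetLE j hrs 2 h₂ 1 h₁
  omega

theorem two_mem_of_le (hC : IsQuadrantTable C) (h : 2 ∈ C r j) (hrs : r ≤ s) : 2 ∈ C s j := by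
  by_contra h₂
  have := hC.le_of_two_mem_of_one_mem h (s := s) (by simp [hC.eq_one h₂])
  exact h₂ (hrs.antisymm this ▸ h)

theorem one_mem_of_le (hC : IsQuadrantTable C) (h : 1 ∈ C s j) (hrs : r ≤ s) : 1 ∈ C r j := by
  by_contra h₁
  have := hC.le_of_two_mem_of_one_mem (r := r) (by simp [hC.eq_two h₁]) h
  exact h₁ (hrs.antisymm this ▸ h)

theorem isGreatest_botA (hC : IsQuadrantTable C) (hj : ColMixed 1 C j) :
    IsGreatest {r | 1 ∈ C r j} (botA 1 C j) := by
  obtain ⟨s, hs⟩ := hj.2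
  have hbdd : BddAbove {r | 1 ∈ C r j} := ⟨s, fun _ => hC.le_of_two_mem_of_one_mem hs⟩
  exact ⟨Nat.sSup_mem hj.1 hbdd, fun _ => le_csSup hbdd⟩

theorem not_colMixed_and_colMixed_of_descent (hC : IsQuadrantTable C) (hB : Benign C) {k : ℕ}
    (hd : Descent 1 C k) : ¬ (ColMixed 1 C k ∧ ColMixed 1 C (k + 1)) := by
  rintro ⟨hk, hk'⟩
  obtain ⟨r, h₂, h₁⟩ := hd
  obtain ⟨hle, hlt⟩ := hB.sep_le_sep (Nat.lt_add_one k) hk hk'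
  have hsep : sep 1 C k ≤ r := Nat.sInf_le h₂
  have htrans : 2 ∈ C (sep 1 C (k + 1)) (k + 1) := (isLeast_sep hk'.2).1
  have hr : sep 1 C (k + 1) = r :=
    (hle.trans hsep).antisymm (hC.le_of_two_mem_of_one_mem htrans h₁)
  have := hlt ⟨r, hC.eq_pair h₁ (hr ▸ htrans)⟩
  omega

end IsQuadrantTable

/-- The restriction of a filling of the quadrant to the skew shape `lam/mu`. -/
noncomputable def restrictShape (lam mu : ℕ → ℕ) (C : ℕ → ℕ → Finset ℕ) : ℕ → ℕ → Finset ℕ :=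
  fun r j => if InShape lam mu r j then C r j else ∅

theorem mem_restrictShape {lam mu : ℕ → ℕ} {C : ℕ → ℕ → Finset ℕ} {r j x : ℕ} :
    x ∈ restrictShape lam mu C r j ↔ InShape lam mu r j ∧ x ∈ C r j := by
  by_cases hr : InShape lam mu r j <;> simp [restrictShape, hr]

/-- `C` presents the table `T` of shape `lam/mu`: `C` fills the whole quadrant, `T` is its
restriction to the shape, and the restriction keeps the transition of every mixed column visible. -/
structure Presents (lam mu : ℕ → ℕ) (C T : ℕ → ℕ → Finset ℕ) : Prop
    extends IsQuadrantTable C where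
  colMixed : ∀ {j}, ColMixed 1 C j → ColMixed 1 T j
  eq_restrictShape : T = restrictShape lam mu C

namespace Presents

variable {lam mu : ℕ → ℕ} {C T : ℕ → ℕ → Finset ℕ} {j k r x : ℕ}

theorem mem_iff (h : Presents lam mu C T) : x ∈ T r j ↔ InShape lam mu r j ∧ x ∈ C r j := by
  rw [h.eq_restrictShape, mem_restrictShape]

theorem apply_of_inShape (h : Presents lam mu C T) (hr : InShape lam mu r j) :
    T r j = C r j := by
  simp [h.eq_restrictShape, restrictShape, hr]

theorem apply_of_not_inShape (h : Presents lam mu C T) (hr : ¬ InShape lam mu r j) :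
    T r j = ∅ := by
  simp [h.eq_restrictShape, restrictShape, hr]

theorem is12SVTable (h : Presents lam mu C T) : Is12SVTable lam mu T := by
  refine ⟨fun r j hr => h.apply_of_not_inShape hr, fun r j hr => ?_, fun r j hr hr' => ?_⟩
  · rw [h.apply_of_inShape hr]
    exact ⟨h.nonempty r j, h.subset r j⟩
  · rw [h.apply_of_inShape hr, h.apply_of_inShape hr']
    exact h.finsetLE j r.lt_succ_self

theorem colHas (h : Presents lam mu C T) : ColHas T j x → ColHas C j x :=
  fun ⟨r, hr⟩ => ⟨r, (h.mem_iff.1 hr).2⟩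

theorem colMixed_iff (h : Presents lam mu C T) : ColMixed 1 T j ↔ ColMixed 1 C j :=
  ⟨fun hj => ⟨h.colHas hj.1, h.colHas hj.2⟩, h.colMixed⟩

theorem eq_one_of_colPureA (h : Presents lam mu C T) (hj : ColPureA 1 T j) (r : ℕ) :
    C r j = {1} :=
  h.eq_one fun h₂ => hj.2 (h.colMixed ⟨h.colHas hj.1, r, h₂⟩).2

theorem eq_two_of_colPureB (h : Presents lam mu C T) (hj : ColPureB 1 T j) (r : ℕ) :
    C r j = {2} :=
  h.eq_two fun h₁ => hj.2 (h.colMixed ⟨⟨r, h₁⟩, h.colHas hj.1⟩).1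

theorem descent_iff (h : Presents lam mu C T) :
    Descent 1 T k ↔
      ∃ r, InShape lam mu r k ∧ InShape lam mu r (k + 1) ∧ 2 ∈ C r k ∧ 1 ∈ C r (k + 1) := by
  simp only [Descent, h.mem_iff]
  exact exists_congr fun r => by tauto

section Shape

variable (hlam : Antitone lam) (hmu : Antitone mu)
include hlam hmu

theorem inShape_of_transition (h : Presents lam mu C T) (hj : ColMixed 1 C j)
    (h₁ : ∀ s, 1 ∈ C s j → s ≤ r) (h₂ : ∀ s, 2 ∈ C s j → r ≤ s) : InShape lam mu r j := by
  obtain ⟨⟨s, hs⟩, t, ht⟩ := h.colMixed hj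
  rw [h.mem_iff] at hs ht
  exact hs.1.of_le_of_le hlam hmu ht.1 (h₁ s hs.2) (h₂ t ht.2) le_rfl le_rfl

theorem inShape_sep (h : Presents lam mu C T) (hj : ColMixed 1 C j) :
    InShape lam mu (sep 1 C j) j :=
  have hsep := isLeast_sep hj.2
  h.inShape_of_transition hlam hmu hj
    (fun _ => h.le_of_two_mem_of_one_mem hsep.1) fun _ hs => hsep.2 hs

theorem inShape_botA (h : Presents lam mu C T) (hj : ColMixed 1 C j) :
    InShape lam mu (botA 1 C j) j :=
  have hbot := h.isGreatest_botA hj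
  h.inShape_of_transition hlam hmu hj
    (fun _ hs => hbot.2 hs) fun _ hs => h.le_of_two_mem_of_one_mem hs hbot.1

theorem inShape_of_eq_pair (h : Presents lam mu C T) (hr : C r j = {1, 2}) :
    InShape lam mu r j := by
  have h₁ : 1 ∈ C r j := by simp [hr]
  have h₂ : 2 ∈ C r j := by simp [hr]
  exact h.inShape_of_transition hlam hmu ⟨⟨r, h₁⟩, r, h₂⟩
    (fun _ => h.le_of_two_mem_of_one_mem h₂) fun _ hs => h.le_of_two_mem_of_one_mem hs h₁

theorem sep_eq (h : Presents lam mu C T) (hj : ColMixed 1 C j) : sep 1 T j = sep 1 C j :=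
  have hsep := isLeast_sep hj.2
  IsLeast.csInf_eq ⟨h.mem_iff.2 ⟨h.inShape_sep hlam hmu hj, hsep.1⟩,
    fun _ hr => hsep.2 (h.mem_iff.1 hr).2⟩

theorem botA_eq (h : Presents lam mu C T) (hj : ColMixed 1 C j) : botA 1 T j = botA 1 C j :=
  have hbot := h.isGreatest_botA hj
  IsGreatest.csSup_eq ⟨h.mem_iff.2 ⟨h.inShape_botA hlam hmu hj, hbot.1⟩,
    fun _ hr => hbot.2 (h.mem_iff.1 hr).2⟩

theorem ite_sep_eq (h : Presents lam mu C T) (hj : ColMixed 1 T j) (r : ℕ) :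
    (if r < sep 1 T j then {1} else if r = sep 1 T j then T r j else {2}) = C r j := by
  have hC := h.colMixed_iff.1 hj
  have hsep := isLeast_sep hC.2
  rw [h.sep_eq hlam hmu hC]
  split_ifs with hlt heq
  · exact (h.eq_one fun h₂ => hlt.not_ge (hsep.2 h₂)).symm
  · exact h.apply_of_inShape (heq ▸ h.inShape_sep hlam hmu hC)
  · exact (h.eq_two fun h₁ =>
      heq ((h.le_of_two_mem_of_one_mem hsep.1 h₁).antisymm (not_lt.1 hlt))).symm

theorem ite_botA_eq (h : Presents lam mu C T) (hj : ColMixed 1 T j) (r : ℕ) :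
    (if r < botA 1 T j then {1} else if r = botA 1 T j then T r j else {2}) = C r j := by
  have hC := h.colMixed_iff.1 hj
  have hbot := h.isGreatest_botA hC
  rw [h.botA_eq hlam hmu hC]
  split_ifs with hlt heq
  · exact (h.eq_one fun h₂ => hlt.not_ge (h.le_of_two_mem_of_one_mem h₂ hbot.1)).symm
  · exact h.apply_of_inShape (heq ▸ h.inShape_botA hlam hmu hC)
  · exact (h.eq_two fun h₁ => heq ((hbot.2 h₁).antisymm (not_lt.1 hlt))).symm

theorem benign_iff (h : Presents lam mu C T) : Benign T ↔ Benign C := by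
  refine benign_congr (fun j => h.colMixed_iff)
    (fun j hj => h.sep_eq hlam hmu (h.colMixed_iff.1 hj)) fun i j => ?_
  by_cases hi : InShape lam mu i j
  · rw [h.apply_of_inShape hi]
  · simp only [h.apply_of_not_inShape hi, mt (h.inShape_of_eq_pair hlam hmu) hi, iff_false]
    decide

theorem not_colMixed_and_colMixed (h : Presents lam mu C T) (hB : Benign T)
    (hd : Descent 1 T k) : ¬ (ColMixed 1 C k ∧ ColMixed 1 C (k + 1)) := by
  obtain ⟨r, -, -, hr⟩ := h.descent_iff.1 hd
  exact h.not_colMixed_and_colMixed_of_descent ((h.benign_iff hlam hmu).1 hB) ⟨r, hr⟩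

theorem descent_cases (h : Presents lam mu C T) (hB : Benign T) (hd : Descent 1 T k) :
    ColMixed 1 T k ∧ ColPureA 1 T (k + 1) ∨ ColPureB 1 T k ∧ ColMixed 1 T (k + 1) ∨
      ColPureB 1 T k ∧ ColPureA 1 T (k + 1) := by
  have hnot := h.not_colMixed_and_colMixed hlam hmu hB hd
  rw [← h.colMixed_iff, ← h.colMixed_iff] at hnot
  obtain ⟨r, h₂, h₁⟩ := hd
  have hk : ColHas T k (1 + 1) := ⟨r, h₂⟩
  have hk' : ColHas T (k + 1) 1 := ⟨r, h₁⟩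
  unfold ColMixed ColPureA ColPureB at *
  tauto

theorem resFun_apply_left (h : Presents lam mu C T) (hB : Benign T) (hd : Descent 1 T k)
    (hr : InShape lam mu r k) : resFun 1 T k r k = C r (k + 1) := by
  have hne : (T r k).Nonempty := by rw [h.apply_of_inShape hr]; exact h.nonempty r k
  rcases h.descent_cases hlam hmu hB hd with ⟨hk, hk'⟩ | ⟨hk, hk'⟩ | ⟨hk, hk'⟩
  · simp [resFun, hk, hk', Finset.image_const hne, h.eq_one_of_colPureA hk']
  · have hnot : ¬ ColMixed 1 T k := fun hm => hk.2 hm.1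
    simp [resFun, hnot, hk, hk', hne, ← h.ite_botA_eq hlam hmu hk' r]
  · have hnot : ¬ ColMixed 1 T k := fun hm => hk.2 hm.1
    have hnot' : ¬ ColMixed 1 T (k + 1) := fun hm => hk'.2 hm.2
    simp [resFun, hnot, hnot', hk, hk', Finset.image_const hne, h.eq_one_of_colPureA hk']

theorem resFun_apply_right (h : Presents lam mu C T) (hB : Benign T) (hd : Descent 1 T k)
    (hr : InShape lam mu r (k + 1)) : resFun 1 T k r (k + 1) = C r k := by
  have hne : (T r (k + 1)).Nonempty := by rw [h.apply_of_inShape hr]; exact h.nonempty r (k + 1)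
  rcases h.descent_cases hlam hmu hB hd with ⟨hk, hk'⟩ | ⟨hk, hk'⟩ | ⟨hk, hk'⟩
  · simp [resFun, hk, hk', hne, ← h.ite_sep_eq hlam hmu hk r]
  · have hnot : ¬ ColMixed 1 T k := fun hm => hk.2 hm.1
    simp [resFun, hnot, hk, hk', Finset.image_const hne, h.eq_two_of_colPureB hk]
  · have hnot : ¬ ColMixed 1 T k := fun hm => hk.2 hm.1
    have hnot' : ¬ ColMixed 1 T (k + 1) := fun hm => hk'.2 hm.2
    simp [resFun, hnot, hnot', hk, hk', Finset.image_const hne, h.eq_two_of_colPureB hk]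

theorem resFun_eq_restrictShape (h : Presents lam mu C T) (hB : Benign T) (hd : Descent 1 T k) :
    resFun 1 T k = restrictShape lam mu (permuteColumns C (swap k (k + 1))) := by
  funext r j
  by_cases hr : InShape lam mu r j
  · simp only [restrictShape, if_pos hr, permuteColumns]
    obtain rfl | hk := eq_or_ne j k
    · rw [h.resFun_apply_left hlam hmu hB hd hr, Equiv.swap_apply_left]
    obtain rfl | hk' := eq_or_ne j (k + 1)
    · rw [h.resFun_apply_right hlam hmu hB hd hr, Equiv.swap_apply_right]
    · rw [resFun_of_ne hk hk', h.apply_of_inShape hr, Equiv.swap_apply_of_ne_of_ne hk hk']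
  · rw [resFun_eq_empty (h.apply_of_not_inShape hr), restrictShape, if_neg hr]

/-- At the descent row both columns lie in the shape, so every `1` of column `k` sits in a row of
column `k + 1` and every `2` of column `k + 1` sits in a row of column `k`. -/
theorem presents_restrictShape (h : Presents lam mu C T) (hd : Descent 1 T k) :
    Presents lam mu (permuteColumns C (swap k (k + 1)))
      (restrictShape lam mu (permuteColumns C (swap k (k + 1)))) := by
  obtain ⟨t, ht, ht', h₂, h₁⟩ := h.descent_iff.1 hd
  refine { h.permuteColumns _ with eq_restrictShape := rfl, colMixed := fun {j} hj => ?_ }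
  obtain ⟨⟨s₁, hs₁⟩, s₂, hs₂⟩ := h.colMixed (j := swap k (k + 1) j) hj
  simp only [ColMixed, ColHas, mem_restrictShape, permuteColumns]
  rw [h.mem_iff] at hs₁ hs₂
  obtain rfl | hjk := eq_or_ne j k
  · simp only [Equiv.swap_apply_left] at hs₂ ⊢
    have hts := h.le_of_two_mem_of_one_mem hs₂.2 h₁
    exact ⟨⟨t, ht, h₁⟩, s₂, ht.of_le_of_le hlam hmu hs₂.1 hts le_rfl le_rfl (by omega), hs₂.2⟩
  obtain rfl | hjk' := eq_or_ne j (k + 1)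
  · simp only [Equiv.swap_apply_right] at hs₁ ⊢
    have hst := h.le_of_two_mem_of_one_mem h₂ hs₁.2
    exact ⟨⟨s₁, hs₁.1.of_le_of_le hlam hmu ht' le_rfl hst (by omega) le_rfl, hs₁.2⟩, t, ht', h₂⟩
  · rw [Equiv.swap_apply_of_ne_of_ne hjk hjk'] at hs₁ hs₂ ⊢
    exact ⟨⟨s₁, hs₁⟩, s₂, hs₂⟩

theorem presents_resFun (h : Presents lam mu C T) (hB : Benign T) (hd : Descent 1 T k) :
    Presents lam mu (permuteColumns C (swap k (k + 1))) (resFun 1 T k) := by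
  rw [h.resFun_eq_restrictShape hlam hmu hB hd]
  exact h.presents_restrictShape hlam hmu hd

theorem benign_resFun (h : Presents lam mu C T) (hB : Benign T) (hd : Descent 1 T k) :
    Benign (resFun 1 T k) :=
  ((h.presents_resFun hlam hmu hB hd).benign_iff hlam hmu).2 <|
    ((h.benign_iff hlam hmu).1 hB).permuteColumns_swap
      (h.not_colMixed_and_colMixed hlam hmu hB hd)

theorem exists_resStep (h : Presents lam mu C T) (hB : Benign T)
    (hr : InShape lam mu r k) (hr' : InShape lam mu r (k + 1)) (h₂ : 2 ∈ C r k)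
    (h₁ : 1 ∈ C r (k + 1)) :
    ∃ T', ResStep 1 T T' ∧ Benign T' ∧
      Presents lam mu (permuteColumns C (swap k (k + 1))) T' :=
  have hd := h.descent_iff.2 ⟨r, hr, hr', h₂, h₁⟩
  ⟨_, ⟨k, hd, rfl⟩, h.benign_resFun hlam hmu hB hd, h.presents_resFun hlam hmu hB hd⟩

theorem exists_join_of_add_two_le (h : Presents lam mu C T) (hB : Benign T) {u v : ℕ}
    (huv : u + 2 ≤ v) (hu : Descent 1 T u) (hv : Descent 1 T v) :
    ∃ T', Is12SVTable lam mu T' ∧ Benign T' ∧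
      Relation.ReflTransGen (ResStep 1) (resFun 1 T u) T' ∧
      Relation.ReflTransGen (ResStep 1) (resFun 1 T v) T' := by
  obtain ⟨r, hru, hru', hu₂, hu₁⟩ := h.descent_iff.1 hu
  obtain ⟨s, hsv, hsv', hv₂, hv₁⟩ := h.descent_iff.1 hv
  have hcomm : swap u (u + 1) * swap v (v + 1) = swap v (v + 1) * swap u (u + 1) :=
    (Equiv.Perm.disjoint_swap_swap (by simp; omega)).commute
  obtain ⟨T', hstep, hB', hT'⟩ := (h.presents_resFun hlam hmu hB hu).exists_resStep hlam hmu
    (h.benign_resFun hlam hmu hB hu) hsv hsv'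
    (by rwa [permuteColumns, Equiv.swap_apply_of_ne_of_ne (by omega) (by omega)])
    (by rwa [permuteColumns, Equiv.swap_apply_of_ne_of_ne (by omega) (by omega)])
  obtain ⟨T'', hstep', -, hT''⟩ := (h.presents_resFun hlam hmu hB hv).exists_resStep hlam hmu
    (h.benign_resFun hlam hmu hB hv) hru hru'
    (by rwa [permuteColumns, Equiv.swap_apply_of_ne_of_ne (by omega) (by omega)])
    (by rwa [permuteColumns, Equiv.swap_apply_of_ne_of_ne (by omega) (by omega)])
  have heq : T' = T'' := by
    rw [hT'.eq_restrictShape, hT''.eq_restrictShape, permuteColumns_permuteColumns,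
      permuteColumns_permuteColumns, hcomm]
  exact ⟨T', hT'.is12SVTable, hB', .single hstep, heq ▸ .single hstep'⟩

/-- After the first step on either side, the remaining descents are all witnessed in a single row:
row `s` of the second descent on the left, row `r` of the first descent on the right. -/
theorem exists_join_succ (h : Presents lam mu C T) (hB : Benign T) {u : ℕ}
    (hu : Descent 1 T u) (hv : Descent 1 T (u + 1)) :
    ∃ T', Is12SVTable lam mu T' ∧ Benign T' ∧
      Relation.ReflTransGen (ResStep 1) (resFun 1 T u) T' ∧
      Relation.ReflTransGen (ResStep 1) (resFun 1 T (u + 1)) T' := by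
  obtain ⟨r, hru, hru', hu₂, hu₁⟩ := h.descent_iff.1 hu
  obtain ⟨s, hsv, hsv', hv₂, hv₁⟩ := h.descent_iff.1 hv
  have hrs : r ≤ s := h.le_of_two_mem_of_one_mem hv₂ hu₁
  have hsu : InShape lam mu s u := hru.of_le_of_le hlam hmu hsv hrs le_rfl le_rfl (by omega)
  have hrv : InShape lam mu r (u + 2) :=
    hru'.of_le_of_le hlam hmu hsv' le_rfl hrs (by omega) le_rfl
  have hsu₂ : 2 ∈ C s u := h.two_mem_of_le hu₂ hrs
  have hrv₁ : 1 ∈ C r (u + 2) := h.one_mem_of_le hv₁ hrs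
  obtain ⟨P₁, hP₁, hBP₁, hCP₁⟩ := (h.presents_resFun hlam hmu hB hu).exists_resStep hlam hmu
    (h.benign_resFun hlam hmu hB hu) hsv hsv'
    (by grind [permuteColumns])
    (by grind [permuteColumns])
  obtain ⟨P₂, hP₂, hBP₂, hCP₂⟩ := hCP₁.exists_resStep hlam hmu hBP₁ hsu hsv
    (by grind [permuteColumns])
    (by grind [permuteColumns])
  obtain ⟨Q₁, hQ₁, hBQ₁, hCQ₁⟩ := (h.presents_resFun hlam hmu hB hv).exists_resStep hlam hmu
    (h.benign_resFun hlam hmu hB hv) hru hru'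
    (by grind [permuteColumns])
    (by grind [permuteColumns])
  obtain ⟨Q₂, hQ₂, -, hCQ₂⟩ := hCQ₁.exists_resStep hlam hmu hBQ₁ hru' hrv
    (by grind [permuteColumns])
    (by grind [permuteColumns])
  have heq : P₂ = Q₂ := by
    rw [hCP₂.eq_restrictShape, hCQ₂.eq_restrictShape]
    simp only [permuteColumns_permuteColumns, add_assoc, one_add_one_eq_two,
      swap_mul_swap_mul_swap_comm (show u ≠ u + 1 by omega) (show u ≠ u + 2 by omega)
        (show u + 1 ≠ u + 2 by omega)]
  exact ⟨P₂, hCP₂.is12SVTable, hBP₂, .tail (.single hP₁) hP₂, heq ▸ .tail (.single hQ₁) hQ₂⟩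

end Shape

end Presents

theorem Is12SVTable.finsetLE_of_lt {lam mu : ℕ → ℕ} (hlam : Antitone lam) (hmu : Antitone mu)
    {T : ℕ → ℕ → Finset ℕ} (hT : Is12SVTable lam mu T) {r s j : ℕ} (hrs : r < s)
    (hr : InShape lam mu r j) (hs : InShape lam mu s j) : FinsetLE (T r j) (T s j) := by
  induction s, hrs using Nat.le_induction with
  | base => exact hT.2.2 r j hr hs
  | succ m hrm ih =>
    have hm : InShape lam mu m j :=
      hr.of_le_of_le hlam hmu hs (Nat.le_of_succ_le hrm) m.le_succ le_rfl le_rfl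
    obtain ⟨y, hy⟩ := (hT.2.1 m j hm).1
    exact fun x hx z hz => (ih hm x hx y hy).trans (hT.2.2 m j hm hs y hy z hz)

/-- The extension of a table to the whole quadrant: outside the shape, a mixed column is continued
by `{1}` upwards and by `{2}` downwards, a pure column by its letter, and an empty column is filled
with `{1}`. -/
noncomputable def extendColumns (T : ℕ → ℕ → Finset ℕ) : ℕ → ℕ → Finset ℕ :=
  fun r j =>
    if (T r j).Nonempty then T r j
    else if ColHas T j 2 → ∃ s > r, 1 ∈ T s j then {1} else {2}

theorem extendColumns_nonempty (T : ℕ → ℕ → Finset ℕ) (r j : ℕ) :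
    (extendColumns T r j).Nonempty := by
  unfold extendColumns
  split_ifs with hne
  · exact hne
  all_goals simp

theorem colHas_two_of_extendColumns {T : ℕ → ℕ → Finset ℕ} {j : ℕ}
    (h : ColHas (extendColumns T) j 2) : ColHas T j 2 := by
  obtain ⟨r, hr⟩ := h
  unfold extendColumns at hr
  split_ifs at hr with hne hlow
  · exact ⟨r, hr⟩
  · simp at hr
  · exact (Classical.not_imp.1 hlow).1

theorem ColMixed.of_extendColumns {T : ℕ → ℕ → Finset ℕ} {j : ℕ}
    (h : ColMixed 1 (extendColumns T) j) : ColMixed 1 T j := by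
  have h₂ : ColHas T j 2 := colHas_two_of_extendColumns h.2
  obtain ⟨r, hr⟩ := h.1
  refine ⟨?_, h₂⟩
  unfold extendColumns at hr
  split_ifs at hr with hne hlow
  · exact ⟨r, hr⟩
  · obtain ⟨s, -, hs⟩ := hlow h₂
    exact ⟨s, hs⟩
  · simp at hr

section Extension

variable {lam mu : ℕ → ℕ} {T : ℕ → ℕ → Finset ℕ}

theorem Is12SVTable.nonempty_iff (hT : Is12SVTable lam mu T) {r j : ℕ} :
    (T r j).Nonempty ↔ InShape lam mu r j :=
  ⟨fun h => by_contra fun hr => h.ne_empty (hT.1 r j hr), fun hr => (hT.2.1 r j hr).1⟩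

theorem Is12SVTable.extendColumns_subset (hT : Is12SVTable lam mu T) (r j : ℕ) :
    extendColumns T r j ⊆ {1, 2} := by
  unfold extendColumns
  split_ifs with hne
  · exact (hT.2.1 r j (hT.nonempty_iff.1 hne)).2
  all_goals simp

theorem Is12SVTable.finsetLE_extendColumns (hlam : Antitone lam) (hmu : Antitone mu)
    (hT : Is12SVTable lam mu T) {r s : ℕ} (j : ℕ) (hrs : r < s) :
    FinsetLE (extendColumns T r j) (extendColumns T s j) := by
  have hcol {i k : ℕ} (h₂ : 2 ∈ T i j) (h₁ : 1 ∈ T k j) : k ≤ i := by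
    by_contra! hik
    have := hT.finsetLE_of_lt hlam hmu hik (hT.nonempty_iff.1 ⟨2, h₂⟩)
      (hT.nonempty_iff.1 ⟨1, h₁⟩) 2 h₂ 1 h₁
    omega
  intro x hx y hy
  have hx' := hT.extendColumns_subset r j hx
  have hy' := hT.extendColumns_subset s j hy
  suffices ¬ (x = 2 ∧ y = 1) by grind
  rintro ⟨rfl, rfl⟩
  have h₂ : ColHas T j 2 := colHas_two_of_extendColumns ⟨r, hx⟩
  obtain ⟨k, hsk, hk⟩ : ∃ k ≥ s, 1 ∈ T k j := by
    unfold extendColumns at hy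
    split_ifs at hy with hne hlow
    · exact ⟨s, le_rfl, hy⟩
    · obtain ⟨k, hk, h₁⟩ := hlow h₂
      exact ⟨k, hk.le, h₁⟩
    · simp at hy
  unfold extendColumns at hx
  split_ifs at hx with hne hlow
  · exact (hrs.trans_le hsk).not_ge (hcol hx hk)
  · simp at hx
  · exact hlow fun _ => ⟨k, hrs.trans_le hsk, hk⟩

theorem Is12SVTable.presents_extendColumns (hlam : Antitone lam) (hmu : Antitone mu)
    (hT : Is12SVTable lam mu T) : Presents lam mu (extendColumns T) T where
  nonempty := extendColumns_nonempty T
  subset := hT.extendColumns_subset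
  finsetLE := hT.finsetLE_extendColumns hlam hmu
  colMixed := ColMixed.of_extendColumns
  eq_restrictShape := by
    funext r j
    by_cases hr : InShape lam mu r j
    · rw [restrictShape, if_pos hr, extendColumns, if_pos (hT.nonempty_iff.2 hr)]
    · rw [restrictShape, if_neg hr, hT.1 r j hr]

end Extension

theorem resolution_local_confluence_general {lam mu : ℕ → ℕ} (hlam : Antitone lam)
    (hmu : Antitone mu) {T P Q : ℕ → ℕ → Finset ℕ} (hT : Is12SVTable lam mu T) (hTB : Benign T)
    (hTP : ResStep 1 T P) (hTQ : ResStep 1 T Q) :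
    ∃ T', Is12SVTable lam mu T' ∧ Benign T' ∧
      Relation.ReflTransGen (ResStep 1) P T' ∧
      Relation.ReflTransGen (ResStep 1) Q T' := by
  obtain ⟨u, hu, rfl⟩ := hTP
  obtain ⟨v, hv, rfl⟩ := hTQ
  have h := hT.presents_extendColumns hlam hmu
  wlog huv : u ≤ v generalizing u v
  · obtain ⟨T', hT', hB', hPT', hQT'⟩ := this v hv u hu (le_of_not_ge huv)
    exact ⟨T', hT', hB', hQT', hPT'⟩
  obtain rfl | rfl | huv : u = v ∨ v = u + 1 ∨ u + 2 ≤ v := by omega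
  · exact ⟨_, (h.presents_resFun hlam hmu hTB hu).is12SVTable, h.benign_resFun hlam hmu hTB hu,
      .refl, .refl⟩
  · exact h.exists_join_succ hlam hmu hTB hu hv
  · exact h.exists_join_of_add_two_le hlam hmu hTB huv hu hv

/-- **local confluence.** Let `T, P, Q` be benign 12-SV tables of shape
`lam/mu` with `T → P` and `T → Q` (single descent-resolution steps). Then there is a benign
12-SV table `T'` with `P →* T'` and `Q →* T'`. -/
theorem resolution_local_confluence (lam mu : ℕ → ℕ)
    (hlam : IsPartitionFun lam) (hmu : IsPartitionFun mu) (hsub : ∀ r, mu r ≤ lam r)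
    (T P Q : ℕ → ℕ → Finset ℕ)
    (hT : Is12SVTable lam mu T) (hTB : Benign T)
    (hP : Is12SVTable lam mu P) (hPB : Benign P)
    (hQ : Is12SVTable lam mu Q) (hQB : Benign Q)
    (hTP : ResStep 1 T P) (hTQ : ResStep 1 T Q) :
    ∃ T', Is12SVTable lam mu T' ∧ Benign T' ∧
      Relation.ReflTransGen (ResStep 1) P T' ∧
      Relation.ReflTransGen (ResStep 1) Q T' := by
  exact resolution_local_confluence_general (antitone_nat_of_succ_le hlam.1)
    (antitone_nat_of_succ_le hmu.1) hT hTB hTP hTQ
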